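/- Let S = ⟨S, δ, L⟩ and S' = ⟨S', δ', L'⟩ be FLTSs that are witnessed w.r.t. f∃ΔPDL and modally saturated w.r.t. f∃ΔK^0, and let x ∈ S, x' ∈ S'. Then the following are equivalent: (i) φ^S(x) ≤ φ^S'(x') for all formulas φ of f∃ΔPDL; (ii) there exists a crisp simulation Z between S and S' with Z(x,x'); (iii) φ^S(x) ≤ φ^S'(x') for all formulas φ of f∃ΔK^0. -/

import Mathlib

open unitInterval

noncomputable section
attribute [local instance] Classical.propDecidable

instance : Fact ((0:ℝ) ≤ 1) := ⟨zero_le_one⟩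

/-- A left-continuous t-norm on the unit interval `[0,1]`: a commutative, associative
binary operation with neutral element `1`, increasing in both arguments, that
distributes over suprema of nonempty sets (left-continuity). -/
structure Tnorm where
  mul : I → I → I
  mul_comm : ∀ x y, mul x y = mul y x
  mul_assoc : ∀ x y z, mul (mul x y) z = mul x (mul y z)
  mul_one : ∀ x, mul x 1 = x
  mul_le_mul : ∀ {a b c d : I}, a ≤ b → c ≤ d → mul a c ≤ mul b d
  left_continuous : ∀ (x : I) (s : Set I), s.Nonempty → mul x (sSup s) = sSup (mul x '' s)

/-- The residuum of a t-norm: `(x ⇒ y) = sup {z | z ⊗ x ≤ y}`. -/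
def Tnorm.res (T : Tnorm) (x y : I) : I := sSup {z : I | T.mul z x ≤ y}

/-- A fuzzy labeled transition system over actions `A`, propositions `P`, states `St`. -/
structure FLTS (A P St : Type) where
  delta : St → A → St → I
  label : St → P → I

/-- A crisp simulation between two FLTSs. -/
def IsSimulation {A P S S' : Type} (M : FLTS A P S) (M' : FLTS A P S')
    (Z : S → S' → Prop) : Prop :=
  (∀ x x', Z x x' → ∀ p, M.label x p ≤ M'.label x' p) ∧
  (∀ x y x' (ρ : A), Z x x' → 0 < M.delta x ρ y →
    ∃ y', M.delta x ρ y ≤ M'.delta x' ρ y' ∧ Z y y')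
mutual
/-- Formulas of f∃ΔPDL. -/
inductive EForm (A P : Type) : Type
  | const : I → EForm A P
  | prop : P → EForm A P
  | baaz : EForm A P → EForm A P
  | and : EForm A P → EForm A P → EForm A P
  | or : EForm A P → EForm A P → EForm A P
  | impl : I → EForm A P → EForm A P
  | dia : EProg A P → EForm A P → EForm A P
/-- Programs of f∃ΔPDL. -/
inductive EProg (A P : Type) : Type
  | act : A → EProg A P
  | comp : EProg A P → EProg A P → EProg A P
  | union : EProg A P → EProg A P → EProg A P
  | star : EProg A P → EProg A P
  | test : EForm A P → EProg A P
end

/-- The ⊗-product of the values of `r` along the path `x :: l`. -/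
def chainProd (T : Tnorm) {St : Type} (r : St → St → I) : St → List St → I
  | _, [] => 1
  | x, y :: l => T.mul (r x y) (chainProd T r y l)

mutual
/-- Semantics of f∃ΔPDL formulas. -/
def eformSem (T : Tnorm) {A P St : Type} (M : FLTS A P St) : EForm A P → St → I
  | .const a, _ => a
  | .prop p, x => M.label x p
  | .baaz φ, x => if eformSem T M φ x = 1 then 1 else 0
  | .and φ ψ, x => min (eformSem T M φ x) (eformSem T M ψ x)
  | .or φ ψ, x => max (eformSem T M φ x) (eformSem T M ψ x)
  | .impl a φ, x => T.res a (eformSem T M φ x)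
  | .dia α φ, x => ⨆ y, T.mul (eprogSem T M α x y) (eformSem T M φ y)
/-- Semantics of f∃ΔPDL programs. -/
def eprogSem (T : Tnorm) {A P St : Type} (M : FLTS A P St) : EProg A P → St → St → I
  | .act ρ, x, y => M.delta x ρ y
  | .comp α β, x, y => ⨆ z, T.mul (eprogSem T M α x z) (eprogSem T M β z y)
  | .union α β, x, y => max (eprogSem T M α x y) (eprogSem T M β x y)
  | .star α, x, y =>
      sSup {v : I | ∃ l : List St, l.getLastD x = y ∧ v = chainProd T (eprogSem T M α) x l}
  | .test φ, x, y => if x = y then eformSem T M φ x else 0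
end

/-- An FLTS is witnessed w.r.t. f∃ΔPDL: every supremum occurring in the semantic
clauses (for `⟨α⟩φ`, `α∘β` and `α*`) is attained by a greatest element. -/
def WitnessedE (T : Tnorm) {A P St : Type} (M : FLTS A P St) : Prop :=
  (∀ (α : EProg A P) (φ : EForm A P) (x : St), ∃ y : St, ∀ z : St,
      T.mul (eprogSem T M α x z) (eformSem T M φ z) ≤
        T.mul (eprogSem T M α x y) (eformSem T M φ y)) ∧
  (∀ (α β : EProg A P) (x y : St), ∃ z : St, ∀ w : St,
      T.mul (eprogSem T M α x w) (eprogSem T M β w y) ≤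
        T.mul (eprogSem T M α x z) (eprogSem T M β z y)) ∧
  (∀ (α : EProg A P) (x y : St), ∃ l : List St, l.getLastD x = y ∧
      ∀ l' : List St, l'.getLastD x = y →
        chainProd T (eprogSem T M α) x l' ≤ chainProd T (eprogSem T M α) x l)

/-- Formulas of f∃ΔK^0. -/
inductive KForm (A P : Type) : Type
  | prop : P → KForm A P
  | baaz : KForm A P → KForm A P
  | and : KForm A P → KForm A P → KForm A P
  | impl : I → KForm A P → KForm A P
  | dia : A → KForm A P → KForm A P

/-- Semantics of f∃ΔK^0 formulas. -/
def kSem (T : Tnorm) {A P St : Type} (M : FLTS A P St) : KForm A P → St → I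
  | .prop p, x => M.label x p
  | .baaz φ, x => if kSem T M φ x = 1 then 1 else 0
  | .and φ ψ, x => min (kSem T M φ x) (kSem T M ψ x)
  | .impl a φ, x => T.res a (kSem T M φ x)
  | .dia ρ φ, x => ⨆ y, T.mul (M.delta x ρ y) (kSem T M φ y)

/-- An FLTS is witnessed w.r.t. f∃ΔK^0: the supremum in the semantic clause for
`⟨ϱ⟩φ` is always attained by a greatest element. -/
def WitnessedK (T : Tnorm) {A P St : Type} (M : FLTS A P St) : Prop :=
  ∀ (φ : KForm A P) (ρ : A) (x : St), ∃ y : St, ∀ z : St,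
    T.mul (M.delta x ρ z) (kSem T M φ z) ≤ T.mul (M.delta x ρ y) (kSem T M φ y)

/-- An FLTS is modally saturated w.r.t. f∃ΔK^0. Here `Ψ.inf (fun φ => kSem T M φ y)`
is the value of the conjunction `⋀Ψ` at `y` (the empty conjunction has value `1 = ⊤`). -/
def ModallySaturated (T : Tnorm) {A P St : Type} (M : FLTS A P St) : Prop :=
  ∀ (x : St) (a : I) (ρ : A) (Γ : Set (KForm A P)), 0 < a → Γ.Infinite →
    (∀ Ψ : Finset (KForm A P), ↑Ψ ⊆ Γ →
      ∃ y : St, a ≤ T.mul (M.delta x ρ y) (Ψ.inf fun φ => kSem T M φ y)) →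
    ∃ y : St, a ≤ M.delta x ρ y ∧ ∀ φ ∈ Γ, 0 < kSem T M φ y

/-!
For a simulation `Z`, a claim `⟨α⟩φ` cannot be transferred by matching single `α`-transitions
unless suprema are attained. Instead, the operators `⟨α⟩` themselves are shown to respect the
order along `Z`. Residuation makes `⊗` commute with suprema, so `⟨α ∘ β⟩ = ⟨α⟩⟨β⟩` and `⟨α*⟩f` is
the least prefixed point of `⟨α⟩` above `f`; this yields the induction on programs without any
witnesses.

Conversely, the relation that every f∃ΔK⁰ formula has at `x'` at least its value at `x` is itself
a simulation: for a transition `x → y`, the formulas `Δ(a → φ)` with `a` the value of `φ` at `y`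
are two-valued and true at `y`, so modal saturation finds one successor of `x'` where all hold.
-/

open Relator

namespace Tnorm

variable (T : Tnorm)

theorem gc_mul_res (a : I) : GaloisConnection (T.mul · a) (T.res a) := by
  intro z b
  refine ⟨fun h => le_sSup h, fun h => ?_⟩
  have hne : {w : I | T.mul w a ≤ b}.Nonempty := by
    refine ⟨0, ?_⟩
    have h0 : T.mul 0 a ≤ T.mul 0 1 := T.mul_le_mul le_rfl unitInterval.le_one'
    rw [T.mul_one] at h0
    exact h0.trans unitInterval.nonneg'
  calc
    T.mul z a ≤ T.mul (T.res a b) a := T.mul_le_mul h le_rfl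
    _ = sSup (T.mul a '' {w | T.mul w a ≤ b}) := by
      rw [T.mul_comm, res, T.left_continuous a _ hne]
    _ ≤ b := sSup_le <| by
      rintro _ ⟨w, hw, rfl⟩
      rw [T.mul_comm]
      exact hw

theorem res_mono (a : I) : Monotone (T.res a) :=
  (T.gc_mul_res a).monotone_u

theorem res_eq_one_iff {a b : I} : T.res a b = 1 ↔ a ≤ b := by
  have h : T.mul 1 a ≤ b ↔ 1 ≤ T.res a b := T.gc_mul_res a 1 b
  rw [T.mul_comm, T.mul_one] at h
  rw [h]
  exact ⟨Eq.ge, le_antisymm unitInterval.le_one'⟩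

theorem zero_mul (a : I) : T.mul 0 a = 0 :=
  (T.gc_mul_res a).l_bot

theorem max_mul (a b c : I) : T.mul (max a b) c = max (T.mul a c) (T.mul b c) :=
  (T.gc_mul_res c).l_sup

theorem iSup_mul {ι : Sort*} (f : ι → I) (a : I) : T.mul (⨆ i, f i) a = ⨆ i, T.mul (f i) a :=
  (T.gc_mul_res a).l_iSup

theorem mul_iSup {ι : Sort*} (a : I) (f : ι → I) : T.mul a (⨆ i, f i) = ⨆ i, T.mul a (f i) := by
  simp only [T.mul_comm a, T.iSup_mul]

/-- The operator `⟨r⟩` on fuzzy sets induced by a fuzzy relation `r`. -/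
def diamond {α β : Type*} (r : α → β → I) (f : β → I) (x : α) : I :=
  ⨆ y, T.mul (r x y) (f y)

theorem diamond_comp {α β γ : Type*} (r : α → β → I) (s : β → γ → I) (f : γ → I) :
    T.diamond (fun x y => ⨆ z, T.mul (r x z) (s z y)) f = T.diamond r (T.diamond s f) := by
  funext x
  simp only [diamond, T.iSup_mul, T.mul_iSup, T.mul_assoc]
  exact iSup_comm

theorem diamond_max {α β : Type*} (r s : α → β → I) (f : β → I) :
    T.diamond (fun x y => max (r x y) (s x y)) f =
      fun x => max (T.diamond r f x) (T.diamond s f x) := by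
  funext x
  simp only [diamond, T.max_mul]
  exact iSup_sup_eq

theorem diamond_test {α : Type*} (g f : α → I) :
    T.diamond (fun x y => if x = y then g x else 0) f = fun x => T.mul (g x) (f x) := by
  funext x
  refine le_antisymm (iSup_le fun y => ?_) (le_iSup_of_le x ?_)
  · dsimp only
    split_ifs with h
    · rw [h]
    · rw [T.zero_mul]
      exact unitInterval.nonneg'
  · simp only [if_true, le_refl]

section Star

variable {St : Type} (r : St → St → I)

/-- The reflexive-transitive closure of a fuzzy relation, interpreting the program `α*`. -/
def star (x y : St) : I :=
  sSup {v | ∃ l : List St, l.getLastD x = y ∧ v = chainProd T r x l}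

theorem diamond_star (f : St → I) (x : St) :
    T.diamond (T.star r) f x = ⨆ l : List St, T.mul (chainProd T r x l) (f (l.getLastD x)) := by
  have star_eq (y : St) :
      T.star r x y = ⨆ (l : List St) (_ : l.getLastD x = y), chainProd T r x l := by
    refine le_antisymm (sSup_le ?_) (iSup₂_le fun l hl => le_sSup ⟨l, hl, rfl⟩)
    rintro _ ⟨l, hl, rfl⟩
    exact le_iSup₂_of_le l hl le_rfl
  simp only [diamond, star_eq, T.iSup_mul]
  rw [iSup_comm]
  simp only [iSup_iSup_eq_right]

theorem le_diamond_star (f : St → I) : f ≤ T.diamond (T.star r) f := by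
  intro x
  rw [T.diamond_star]
  refine le_iSup_of_le [] ?_
  rw [chainProd, T.mul_comm, T.mul_one, List.getLastD_nil]

theorem diamond_diamond_star_le (f : St → I) :
    T.diamond r (T.diamond (T.star r) f) ≤ T.diamond (T.star r) f := by
  intro x
  refine iSup_le fun y => ?_
  rw [T.diamond_star, T.diamond_star, T.mul_iSup]
  refine iSup_le fun l => le_iSup_of_le (y :: l) ?_
  rw [chainProd, T.mul_assoc, List.getLastD_cons]

theorem diamond_star_le {r : St → St → I} {f g : St → I} (hfg : f ≤ g) (hg : T.diamond r g ≤ g) :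
    T.diamond (T.star r) f ≤ g := by
  intro x
  rw [T.diamond_star]
  refine iSup_le fun l => ?_
  induction l generalizing x with
  | nil =>
    rw [chainProd, T.mul_comm, T.mul_one, List.getLastD_nil]
    exact hfg x
  | cons y l ih =>
    rw [chainProd, T.mul_assoc, List.getLastD_cons]
    calc
      T.mul (r x y) (T.mul (chainProd T r y l) (f (l.getLastD y)))
        ≤ T.mul (r x y) (g y) := T.mul_le_mul le_rfl (ih y)
      _ ≤ T.diamond r g x := le_iSup (fun y => T.mul (r x y) (g y)) y
      _ ≤ g x := hg x

end Star

/-- `r'` simulates `r` along `Z`: the operators `⟨r⟩` and `⟨r'⟩` preserve the pointwise order of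
fuzzy sets along `Z`. This is weaker than matching each `r`-transition by an `r'`-transition, and
is closed under the program constructors even when suprema are not attained. -/
def Simulates {S S' : Type*} (Z : S → S' → Prop) (r : S → S → I) (r' : S' → S' → I) : Prop :=
  ((Z ⇒ (· ≤ ·)) ⇒ Z ⇒ (· ≤ ·)) (T.diamond r) (T.diamond r')

namespace Simulates

variable {T}

theorem of_forall_exists {S S' : Type*} {Z : S → S' → Prop} {r : S → S → I} {r' : S' → S' → I}
    (h : ∀ x x' y, Z x x' → 0 < r x y → ∃ y', r x y ≤ r' x' y' ∧ Z y y') :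
    T.Simulates Z r r' := by
  intro f f' hf x x' hx
  refine iSup_le fun y => ?_
  rcases (unitInterval.nonneg' : 0 ≤ r x y).eq_or_lt with h0 | hpos
  · rw [← h0, T.zero_mul]
    exact unitInterval.nonneg'
  · obtain ⟨y', hr, hy⟩ := h x x' y hx hpos
    exact le_iSup_of_le y' (T.mul_le_mul hr (hf hy))

theorem comp {S S' : Type*} {Z : S → S' → Prop} {r s : S → S → I} {r' s' : S' → S' → I}
    (hr : T.Simulates Z r r') (hs : T.Simulates Z s s') :
    T.Simulates Z (fun x y => ⨆ z, T.mul (r x z) (s z y))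
      (fun x y => ⨆ z, T.mul (r' x z) (s' z y)) := by
  intro f f' hf
  rw [T.diamond_comp, T.diamond_comp]
  exact hr (hs hf)

theorem union {S S' : Type*} {Z : S → S' → Prop} {r s : S → S → I} {r' s' : S' → S' → I}
    (hr : T.Simulates Z r r') (hs : T.Simulates Z s s') :
    T.Simulates Z (fun x y => max (r x y) (s x y)) (fun x y => max (r' x y) (s' x y)) := by
  intro f f' hf x x' hx
  rw [T.diamond_max, T.diamond_max]
  exact max_le_max (hr hf hx) (hs hf hx)

theorem test {S S' : Type*} {Z : S → S' → Prop} {g : S → I} {g' : S' → I}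
    (hg : (Z ⇒ (· ≤ ·)) g g') :
    T.Simulates Z (fun x y => if x = y then g x else 0) (fun x y => if x = y then g' x else 0) := by
  intro f f' hf x x' hx
  rw [T.diamond_test, T.diamond_test]
  exact T.mul_le_mul (hg hx) (hf hx)

theorem star {S S' : Type} {Z : S → S' → Prop} {r : S → S → I} {r' : S' → S' → I}
    (hr : T.Simulates Z r r') : T.Simulates Z (T.star r) (T.star r') := by
  intro f f' hf
  -- The largest fuzzy set below `⟨r'*⟩f'` along `Z`; star induction shows that it bounds `⟨r*⟩f`.
  let g : S → I := fun x => ⨅ (x') (_ : Z x x'), T.diamond (T.star r') f' x'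
  have hg : (Z ⇒ (· ≤ ·)) g (T.diamond (T.star r') f') := fun _ x' hx => iInf₂_le x' hx
  have hfg : f ≤ g := fun _ => le_iInf₂ fun x' hx => (hf hx).trans (T.le_diamond_star r' f' x')
  have hrg : T.diamond r g ≤ g := fun _ =>
    le_iInf₂ fun x' hx => (hr hg hx).trans (T.diamond_diamond_star_le r' f' x')
  exact fun x _ hx => (T.diamond_star_le hfg hrg x).trans (hg hx)

end Simulates

end Tnorm

theorem monotone_ite_eq_one : Monotone fun a : I => if a = 1 then (1 : I) else 0 := by
  intro a b hab
  dsimp only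
  split_ifs with ha hb
  · exact le_rfl
  · exact absurd (le_antisymm unitInterval.le_one' (ha ▸ hab)) hb
  · exact unitInterval.nonneg'
  · exact le_rfl

section Semantics

variable {A P S S' : Type}

namespace IsSimulation

variable {M : FLTS A P S} {M' : FLTS A P S'} {Z : S → S' → Prop}

mutual

theorem eformSem_le (T : Tnorm) (hZ : IsSimulation M M' Z) :
    ∀ φ : EForm A P, (Z ⇒ (· ≤ ·)) (eformSem T M φ) (eformSem T M' φ)
  | .const a, _, _, _ => by simp only [eformSem, le_refl]
  | .prop p, x, x', hx => by simpa only [eformSem] using hZ.1 x x' hx p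
  | .baaz φ, _, _, hx => by
    simpa only [eformSem] using monotone_ite_eq_one (hZ.eformSem_le T φ hx)
  | .and φ ψ, _, _, hx => by
    simpa only [eformSem] using min_le_min (hZ.eformSem_le T φ hx) (hZ.eformSem_le T ψ hx)
  | .or φ ψ, _, _, hx => by
    simpa only [eformSem] using max_le_max (hZ.eformSem_le T φ hx) (hZ.eformSem_le T ψ hx)
  | .impl a φ, _, _, hx => by
    simpa only [eformSem] using T.res_mono a (hZ.eformSem_le T φ hx)
  | .dia α φ, _, _, hx => by
    simpa only [eformSem, Tnorm.diamond] using hZ.simulates_eprogSem T α (hZ.eformSem_le T φ) hx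

theorem simulates_eprogSem (T : Tnorm) (hZ : IsSimulation M M' Z) :
    ∀ α : EProg A P, T.Simulates Z (eprogSem T M α) (eprogSem T M' α)
  | .act ρ => .of_forall_exists fun x x' y => by
    simpa only [eprogSem] using hZ.2 x y x' ρ
  | .comp α β => (hZ.simulates_eprogSem T α).comp (hZ.simulates_eprogSem T β)
  | .union α β => (hZ.simulates_eprogSem T α).union (hZ.simulates_eprogSem T β)
  | .star α => (hZ.simulates_eprogSem T α).star
  | .test φ => .test (hZ.eformSem_le T φ)

end

end IsSimulation

namespace KForm

/-- The inclusion of f∃ΔK⁰ into f∃ΔPDL. -/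
def toEForm : KForm A P → EForm A P
  | .prop p => .prop p
  | .baaz φ => .baaz φ.toEForm
  | .and φ ψ => .and φ.toEForm ψ.toEForm
  | .impl a φ => .impl a φ.toEForm
  | .dia ρ φ => .dia (.act ρ) φ.toEForm

/-- The formula `Δ(a → φ)`, asserting that the value of `φ` is at least `a`. -/
def atLeast (a : I) (φ : KForm A P) : KForm A P :=
  .baaz (.impl a φ)

instance [Nonempty P] : Infinite (KForm A P) := by
  inhabit P
  have : Infinite I := Set.infinite_coe_iff.mpr (Set.Icc_infinite (zero_lt_one' ℝ))
  refine Infinite.of_injective (fun a : I => KForm.impl a (.prop default)) fun a b h => ?_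
  exact (KForm.impl.inj h).1

end KForm

theorem eformSem_toEForm (T : Tnorm) (M : FLTS A P S) (φ : KForm A P) :
    eformSem T M φ.toEForm = kSem T M φ := by
  induction φ <;> funext x <;> simp only [KForm.toEForm, eformSem, eprogSem, kSem, *]

theorem WitnessedE.witnessedK {T : Tnorm} {M : FLTS A P S} (h : WitnessedE T M) :
    WitnessedK T M := by
  intro φ ρ x
  simpa only [eprogSem, eformSem_toEForm] using h.1 (.act ρ) φ.toEForm x

theorem kSem_atLeast (T : Tnorm) (M : FLTS A P S) (a : I) (φ : KForm A P) (x : S) :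
    kSem T M (.atLeast a φ) x = if a ≤ kSem T M φ x then 1 else 0 := by
  simp only [KForm.atLeast, kSem, T.res_eq_one_iff]

theorem KForm.exists_kSem_eq_inf [Nonempty P] (T : Tnorm) (Ψ : Finset (KForm A P)) :
    ∃ χ : KForm A P, ∀ {St : Type} (M : FLTS A P St) (x : St),
      kSem T M χ x = Ψ.inf fun φ => kSem T M φ x := by
  induction Ψ using Finset.induction_on with
  | empty =>
    inhabit P
    -- f∃ΔK⁰ has no constants, but `0 → p` always has value `1`.
    refine ⟨.impl 0 (.prop default), fun M x => ?_⟩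
    rw [kSem, Finset.inf_empty]
    exact T.res_eq_one_iff.mpr unitInterval.nonneg'
  | insert ψ Ψ _ ih =>
    obtain ⟨χ, hχ⟩ := ih
    refine ⟨.and ψ χ, fun M x => ?_⟩
    rw [kSem, Finset.inf_insert, hχ]

theorem WitnessedK.exists_delta_le_mul_inf [Nonempty P] {T : Tnorm} {M : FLTS A P S}
    {M' : FLTS A P S'} (hw : WitnessedK T M') {x : S} {x' : S'}
    (hx : ∀ φ : KForm A P, kSem T M φ x ≤ kSem T M' φ x') (ρ : A) {y : S}
    {Ψ : Finset (KForm A P)} (hΨ : ∀ φ ∈ Ψ, kSem T M φ y = 1) :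
    ∃ y', M.delta x ρ y ≤ T.mul (M'.delta x' ρ y') (Ψ.inf fun φ => kSem T M' φ y') := by
  obtain ⟨χ, hχ⟩ := KForm.exists_kSem_eq_inf T Ψ
  obtain ⟨y', hy'⟩ := hw χ ρ x'
  have hχy : kSem T M χ y = 1 := by
    rw [hχ]
    exact le_antisymm unitInterval.le_one' (Finset.le_inf fun φ hφ => (hΨ φ hφ).ge)
  refine ⟨y', ?_⟩
  calc
    M.delta x ρ y = T.mul (M.delta x ρ y) (kSem T M χ y) := by rw [hχy, T.mul_one]
    _ ≤ kSem T M (.dia ρ χ) x := le_iSup (fun y => T.mul (M.delta x ρ y) (kSem T M χ y)) y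
    _ ≤ kSem T M' (.dia ρ χ) x' := hx (.dia ρ χ)
    _ ≤ T.mul (M'.delta x' ρ y') (kSem T M' χ y') := iSup_le hy'
    _ = T.mul (M'.delta x' ρ y') (Ψ.inf fun φ => kSem T M' φ y') := by rw [hχ]

theorem isSimulation_forall_kSem_le [Nonempty P] {T : Tnorm} (M : FLTS A P S) {M' : FLTS A P S'}
    (hw : WitnessedK T M') (hs : ModallySaturated T M') :
    IsSimulation M M' fun x x' => ∀ φ : KForm A P, kSem T M φ x ≤ kSem T M' φ x' := by
  refine ⟨fun x x' hx p => hx (.prop p), fun x y x' ρ hx hpos => ?_⟩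
  let char (φ : KForm A P) : KForm A P := .atLeast (kSem T M φ y) φ
  have char_injective : Function.Injective char := fun φ ψ h =>
    (KForm.impl.inj (KForm.baaz.inj h)).2
  have kSem_char (φ : KForm A P) : kSem T M (char φ) y = 1 := by
    rw [kSem_atLeast, if_pos le_rfl]
  obtain ⟨y', hδ, hy'⟩ := hs x' _ ρ _ hpos (Set.infinite_range_of_injective char_injective)
    fun Ψ hΨ => hw.exists_delta_le_mul_inf hx ρ fun φ hφ => by
      obtain ⟨ψ, rfl⟩ := hΨ hφ
      exact kSem_char ψ
  refine ⟨y', hδ, fun φ => ?_⟩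
  by_contra hφ
  have hpos' : 0 < kSem T M' (char φ) y' := hy' _ ⟨φ, rfl⟩
  rw [kSem_atLeast, if_neg hφ] at hpos'
  exact hpos'.false

end Semantics

theorem simulation_characterization_fePDL_feK0_general {A P S S' : Type} [Nonempty P]
    (T : Tnorm) (M : FLTS A P S) (M' : FLTS A P S') (hw : WitnessedK T M')
    (hs : ModallySaturated T M') (x : S) (x' : S') :
    [∀ φ : EForm A P, eformSem T M φ x ≤ eformSem T M' φ x',
      ∃ Z : S → S' → Prop, IsSimulation M M' Z ∧ Z x x',
      ∀ φ : KForm A P, kSem T M φ x ≤ kSem T M' φ x'].TFAE := by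
  tfae_have 1 → 3 := fun h φ => by simpa only [eformSem_toEForm] using h φ.toEForm
  tfae_have 3 → 2 := fun h => ⟨_, isSimulation_forall_kSem_le M hw hs, h⟩
  tfae_have 2 → 1 := fun ⟨_, hZ, hx⟩ φ => hZ.eformSem_le T φ hx
  tfae_finish

/-- For FLTSs witnessed w.r.t. f∃ΔPDL and modally saturated w.r.t. f∃ΔK^0,
the following are equivalent: (i) `x ≤^∃ x'` (w.r.t. all f∃ΔPDL formulas),
(ii) there is a crisp simulation linking `x` to `x'`,
(iii) `x ≤^{∃,0}_K x'` (w.r.t. all f∃ΔK^0 formulas). -/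
theorem simulation_characterization_fePDL_feK0
    {A P S S' : Type} [Nonempty A] [Nonempty P] [Nonempty S] [Nonempty S']
    (T : Tnorm) (M : FLTS A P S) (M' : FLTS A P S')
    (hwM : WitnessedE T M) (hwM' : WitnessedE T M')
    (hsM : ModallySaturated T M) (hsM' : ModallySaturated T M')
    (x : S) (x' : S') :
    ((∀ φ : EForm A P, eformSem T M φ x ≤ eformSem T M' φ x') ↔
      (∃ Z : S → S' → Prop, IsSimulation M M' Z ∧ Z x x')) ∧
    ((∃ Z : S → S' → Prop, IsSimulation M M' Z ∧ Z x x') ↔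
      (∀ φ : KForm A P, kSem T M φ x ≤ kSem T M' φ x')) := by
  have h := simulation_characterization_fePDL_feK0_general T M M' hwM'.witnessedK hsM' x x'
  exact ⟨h.out 0 1, h.out 1 2⟩
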